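/- Let ℰ be an exact structure on an abelian category 𝒜 such that 𝒜 has enough ℰ-projectives and enough ℰ-injectives, and let (𝒳,𝒴) be a pair of classes of objects of 𝒜 closed under isomorphisms and direct summands. If 𝒳 is ℰ-resolving, 𝒴 = 𝒳^⊥, and every object A of 𝒜 admits an epimorphic 𝒳-precover p : X → A with Ker p ∈ 𝒴, then (𝒳,𝒴) is a complete hereditary ℰ-cotorsion pair. -/

import Mathlib

open CategoryTheory Category Limits

universe v u

namespace ExactPaper

variable {𝒜 : Type u} [Category.{v} 𝒜] [Abelian 𝒜]

/-- A morphism is an admissible monic w.r.t. a class `c` of short complexes if it occurs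
as the first map of a member of `c`. -/
def AdmMono (c : ShortComplex 𝒜 → Prop) {X Y : 𝒜} (f : X ⟶ Y) : Prop :=
  ∃ (Z : 𝒜) (g : Y ⟶ Z) (w : f ≫ g = 0), c (ShortComplex.mk f g w)

/-- A morphism is an admissible epic w.r.t. a class `c` of short complexes if it occurs
as the second map of a member of `c`. -/
def AdmEpi (c : ShortComplex 𝒜 → Prop) {Y Z : 𝒜} (g : Y ⟶ Z) : Prop :=
  ∃ (X : 𝒜) (f : X ⟶ Y) (w : f ≫ g = 0), c (ShortComplex.mk f g w)

/-- A (Quillen) exact structure on an abelian category `𝒜`: a class of short exact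
sequences, called conflations, closed under isomorphisms, containing all split short
exact sequences, such that admissible monics and epics are closed under composition,
pushouts of admissible monics along arbitrary morphisms are admissible monics and
pullbacks of admissible epics along arbitrary morphisms are admissible epics. -/
structure ExactStructure (𝒜 : Type u) [Category.{v} 𝒜] [Abelian 𝒜] where
  conflation : ShortComplex 𝒜 → Prop
  shortExact_of_conflation : ∀ (S : ShortComplex 𝒜), conflation S → S.ShortExact
  conflation_of_iso : ∀ (S T : ShortComplex 𝒜), (S ≅ T) → conflation S → conflation T
  conflation_of_splitting : ∀ (S : ShortComplex 𝒜), S.Splitting → conflation S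
  admMono_comp : ∀ {X Y Z : 𝒜} (f : X ⟶ Y) (g : Y ⟶ Z),
    AdmMono conflation f → AdmMono conflation g → AdmMono conflation (f ≫ g)
  admEpi_comp : ∀ {X Y Z : 𝒜} (f : X ⟶ Y) (g : Y ⟶ Z),
    AdmEpi conflation f → AdmEpi conflation g → AdmEpi conflation (f ≫ g)
  admMono_pushout : ∀ {L M M' : 𝒜} (i : L ⟶ M) (f : L ⟶ M'),
    AdmMono conflation i → AdmMono conflation (pushout.inr i f)
  admEpi_pullback : ∀ {M N M' : 𝒜} (p : M ⟶ N) (g : M' ⟶ N),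
    AdmEpi conflation p → AdmEpi conflation (pullback.snd p g)

namespace ExactStructure

variable (E : ExactStructure 𝒜)

/-- An `ℰ`-projective object. -/
def EProjective (P : 𝒜) : Prop :=
  ∀ (S : ShortComplex 𝒜), E.conflation S → ∀ h : P ⟶ S.X₃, ∃ k : P ⟶ S.X₂, k ≫ S.g = h

/-- An `ℰ`-injective object. -/
def EInjective (I : 𝒜) : Prop :=
  ∀ (S : ShortComplex 𝒜), E.conflation S → ∀ h : S.X₁ ⟶ I, ∃ k : S.X₂ ⟶ I, S.f ≫ k = h

/-- `𝒜` has enough `ℰ`-projectives. -/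
def EnoughProjectives : Prop :=
  ∀ M : 𝒜, ∃ (K P : 𝒜) (i : K ⟶ P) (p : P ⟶ M) (w : i ≫ p = 0),
    E.conflation (ShortComplex.mk i p w) ∧ E.EProjective P

/-- `𝒜` has enough `ℰ`-injectives. -/
def EnoughInjectives : Prop :=
  ∀ M : 𝒜, ∃ (I C : 𝒜) (i : M ⟶ I) (p : I ⟶ C) (w : i ≫ p = 0),
    E.conflation (ShortComplex.mk i p w) ∧ E.EInjective I

/-- `Ext¹_ℰ(M,N) = 0`: every conflation `0 → N → Z → M → 0` splits. -/
def Ext1Zero (M N : 𝒜) : Prop :=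
  ∀ (Z : 𝒜) (i : N ⟶ Z) (p : Z ⟶ M) (w : i ≫ p = 0),
    E.conflation (ShortComplex.mk i p w) → ∃ r : Z ⟶ N, i ≫ r = 𝟙 N

/-- The right `ℰ`-orthogonal class `𝒳^⊥`. -/
def rightPerp (𝒳 : Set 𝒜) : Set 𝒜 := {N | ∀ X ∈ 𝒳, E.Ext1Zero X N}

/-- The left `ℰ`-orthogonal class `^⊥𝒴`. -/
def leftPerp (𝒴 : Set 𝒜) : Set 𝒜 := {M | ∀ Y ∈ 𝒴, E.Ext1Zero M Y}

/-- A class is closed under `ℰ`-extensions. -/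
def ClosedUnderExtensions (𝒯 : Set 𝒜) : Prop :=
  ∀ S : ShortComplex 𝒜, E.conflation S → S.X₁ ∈ 𝒯 → S.X₃ ∈ 𝒯 → S.X₂ ∈ 𝒯

/-- An `ℰ`-resolving class. -/
def Resolving (𝒯 : Set 𝒜) : Prop :=
  (∀ P : 𝒜, E.EProjective P → P ∈ 𝒯) ∧ E.ClosedUnderExtensions 𝒯 ∧
    ∀ S : ShortComplex 𝒜, E.conflation S → S.X₂ ∈ 𝒯 → S.X₃ ∈ 𝒯 → S.X₁ ∈ 𝒯

/-- An `ℰ`-coresolving class. -/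
def Coresolving (𝒯 : Set 𝒜) : Prop :=
  (∀ I : 𝒜, E.EInjective I → I ∈ 𝒯) ∧ E.ClosedUnderExtensions 𝒯 ∧
    ∀ S : ShortComplex 𝒜, E.conflation S → S.X₁ ∈ 𝒯 → S.X₂ ∈ 𝒯 → S.X₃ ∈ 𝒯

/-- `(𝒳,𝒴)` is a complete hereditary `ℰ`-cotorsion pair. -/
def CompleteHereditaryCotorsionPair (𝒳 𝒴 : Set 𝒜) : Prop :=
  𝒳 = E.leftPerp 𝒴 ∧ 𝒴 = E.rightPerp 𝒳 ∧
  (∀ A : 𝒜, ∃ (Y X : 𝒜) (i : Y ⟶ X) (p : X ⟶ A) (w : i ≫ p = 0),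
      E.conflation (ShortComplex.mk i p w) ∧ X ∈ 𝒳 ∧ Y ∈ 𝒴) ∧
  (∀ A : 𝒜, ∃ (Y' X' : 𝒜) (i : A ⟶ Y') (p : Y' ⟶ X') (w : i ≫ p = 0),
      E.conflation (ShortComplex.mk i p w) ∧ X' ∈ 𝒳 ∧ Y' ∈ 𝒴) ∧
  E.Resolving 𝒳

end ExactStructure

/-- `f : X ⟶ A` is an `𝒳`-precover of `A`. -/
def IsPrecover (𝒳 : Set 𝒜) {X A : 𝒜} (f : X ⟶ A) : Prop :=
  X ∈ 𝒳 ∧ ∀ X' : 𝒜, X' ∈ 𝒳 → ∀ g : X' ⟶ A, ∃ h : X' ⟶ X, h ≫ f = g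

/-- `f : X ⟶ A` is an `𝒳`-cover of `A`. -/
def IsCover (𝒳 : Set 𝒜) {X A : 𝒜} (f : X ⟶ A) : Prop :=
  IsPrecover 𝒳 f ∧ ∀ h : X ⟶ X, h ≫ f = f → IsIso h

/-- `f : A ⟶ Y` is a `𝒴`-preenvelope of `A`. -/
def IsPreenvelope (𝒴 : Set 𝒜) {A Y : 𝒜} (f : A ⟶ Y) : Prop :=
  Y ∈ 𝒴 ∧ ∀ Y' : 𝒜, Y' ∈ 𝒴 → ∀ g : A ⟶ Y', ∃ h : Y ⟶ Y', f ≫ h = g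

/-- `f : A ⟶ Y` is a `𝒴`-envelope of `A`. -/
def IsEnvelope (𝒴 : Set 𝒜) {A Y : 𝒜} (f : A ⟶ Y) : Prop :=
  IsPreenvelope 𝒴 f ∧ ∀ h : Y ⟶ Y, f ≫ h = f → IsIso h

/-- A class of objects closed under isomorphisms. -/
def ClosedUnderIsos (𝒳 : Set 𝒜) : Prop := ∀ X Y : 𝒜, (X ≅ Y) → X ∈ 𝒳 → Y ∈ 𝒳

/-- A class of objects closed under direct summands. -/
def ClosedUnderDirectSummands (𝒳 : Set 𝒜) : Prop :=
  ∀ X Y : 𝒜, (∃ (s : Y ⟶ X) (r : X ⟶ Y), s ≫ r = 𝟙 Y) → X ∈ 𝒳 → Y ∈ 𝒳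

end ExactPaper

/-!
Since `𝒳` contains the `ℰ`-projectives, an `ℰ`-projective presentation of `A` factors through any
`𝒳`-precover `p` of `A`, so `p` is an admissible epic by Quillen's obscure axiom and its kernel
sequence is a conflation. If `M ∈ ^⊥𝒴`, this conflation splits for `A = M`, and `M` is a direct
summand of an object of `𝒳`. The conflations `0 → A → Y' → X' → 0` come from Salce's trick: embed
`A` in an `ℰ`-injective `I` with cokernel `C` and pull back along a precover `X → C`; the pullback
is an extension of `I` by an object of `𝒴`, hence lies in `𝒴`, because `𝒳^⊥` contains the
`ℰ`-injectives and is closed under extensions.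
-/

namespace ExactPaper

namespace ExactStructure

variable {𝒜 : Type u} [Category.{v} 𝒜] [Abelian 𝒜] {E : ExactStructure 𝒜}

section Conflation

variable {S : ShortComplex 𝒜}

lemma conflation_of_admMono_of_isColimit (hf : AdmMono E.conflation S.f)
    (hg : IsColimit (CokernelCofork.ofπ S.g S.zero)) : E.conflation S := by
  obtain ⟨Z, g, w, hc⟩ := hf
  have hs := E.shortExact_of_conflation _ hc
  let e : Z ≅ S.X₃ := hs.gIsCokernel.coconePointUniqueUpToIso hg
  have he : g ≫ e.hom = S.g :=
    hs.gIsCokernel.comp_coconePointUniqueUpToIso_hom hg WalkingParallelPair.one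
  exact E.conflation_of_iso (ShortComplex.mk S.f g w) S
    (ShortComplex.isoMk (Iso.refl _) (Iso.refl _) e (by simp) (by simp [he])) hc

lemma conflation_of_admEpi_of_isLimit (hg : AdmEpi E.conflation S.g)
    (hf : IsLimit (KernelFork.ofι S.f S.zero)) : E.conflation S := by
  obtain ⟨X, f, w, hc⟩ := hg
  have hs := E.shortExact_of_conflation _ hc
  let e : X ≅ S.X₁ := hs.fIsKernel.conePointUniqueUpToIso hf
  have he : e.hom ≫ S.f = f :=
    hs.fIsKernel.conePointUniqueUpToIso_hom_comp hf WalkingParallelPair.zero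
  exact E.conflation_of_iso (ShortComplex.mk f S.g w) S
    (ShortComplex.isoMk e (Iso.refl _) (Iso.refl _) (by simp [he]) (by simp)) hc

lemma conflation_pushout (hS : E.conflation S) {N : 𝒜} (f : S.X₁ ⟶ N) :
    E.conflation (ShortComplex.mk (pushout.inr S.f f)
      (pushout.desc S.g 0 (by simp)) (pushout.inr_desc _ _ _)) := by
  have hs := E.shortExact_of_conflation _ hS
  have := hs.epi_g
  have hdesc : S.f ≫ S.g = f ≫ 0 := by simp
  have : Epi (pushout.desc S.g 0 hdesc) := epi_of_epi_fac (pushout.inl_desc S.g 0 hdesc)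
  refine conflation_of_admMono_of_isColimit (E.admMono_pushout S.f f ⟨_, _, _, hS⟩)
    (CokernelCofork.IsColimit.ofπ' _ _ fun k hk ↦ ?_)
  have hk' : S.f ≫ pushout.inl S.f f ≫ k = 0 := by
    rw [pushout.condition_assoc, hk, comp_zero]
  exact ⟨hs.exact.desc _ hk', pushout.hom_ext (by simp [pushout.inl_desc_assoc])
    (by simp [pushout.inr_desc_assoc, hk])⟩

lemma admEpi_of_isPullback {X Y Z W : 𝒜} {fst : W ⟶ X} {snd : W ⟶ Y} {p : X ⟶ Z} {g : Y ⟶ Z}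
    (sq : IsPullback fst snd p g) (hp : AdmEpi E.conflation p) : AdmEpi E.conflation snd := by
  obtain ⟨K, i, w, hc⟩ := E.admEpi_pullback p g hp
  exact ⟨K, i ≫ sq.isoPullback.inv, by simp [w], E.conflation_of_iso (ShortComplex.mk i _ w) _
    (ShortComplex.isoMk (Iso.refl _) sq.isoPullback.symm (Iso.refl _) (by simp) (by simp)) hc⟩

lemma conflation_of_isPullback (hS : E.conflation S) {W Y : 𝒜} {fst : W ⟶ S.X₂} {snd : W ⟶ Y}
    {g : Y ⟶ S.X₃} (sq : IsPullback fst snd S.g g) :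
    E.conflation (ShortComplex.mk (sq.lift S.f 0 (by simp)) snd (sq.lift_snd _ _ _)) := by
  have hs := E.shortExact_of_conflation _ hS
  have := hs.mono_f
  have : Mono (sq.lift S.f 0 (by simp)) := mono_of_mono_fac (sq.lift_fst S.f 0 (by simp))
  refine conflation_of_admEpi_of_isLimit (admEpi_of_isPullback sq ⟨_, _, _, hS⟩)
    (KernelFork.IsLimit.ofι' _ _ fun k hk ↦ ?_)
  have hk' : (k ≫ fst) ≫ S.g = 0 := by rw [assoc, sq.w, reassoc_of% hk, zero_comp]
  exact ⟨hs.exact.lift _ hk', sq.hom_ext (by simp) (by simp [hk])⟩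

/-- Third isomorphism theorem: `Z / S.X₁` is the pushout of `Z` along the quotient map
`S.X₂ ⟶ S.X₂ / S.X₁ = S.X₃`. -/
lemma conflation_comp_pushout_inl (hS : E.conflation S) {Z : 𝒜} {i : S.X₂ ⟶ Z}
    (hi : AdmMono E.conflation i) :
    E.conflation (ShortComplex.mk (S.f ≫ i) (pushout.inl i S.g) (by
      rw [assoc, pushout.condition, S.zero_assoc, zero_comp])) := by
  have hs := E.shortExact_of_conflation _ hS
  have := hs.epi_g
  refine conflation_of_admMono_of_isColimit (E.admMono_comp _ _ ⟨_, _, _, hS⟩ hi)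
    (CokernelCofork.IsColimit.ofπ' _ _ fun k hk ↦ ?_)
  have hk' : S.f ≫ i ≫ k = 0 := by rw [← assoc, hk]
  exact ⟨pushout.desc k (hs.exact.desc _ hk') (by simp), pushout.inl_desc _ _ _⟩

/-- Quillen's obscure axiom. By the five lemma, `kernel p ⟶ X ⟶ A` is the pushout of the
conflation ending in `h ≫ p`. -/
lemma admEpi_of_comp {P X A : 𝒜} (h : P ⟶ X) (p : X ⟶ A) (hhp : AdmEpi E.conflation (h ≫ p)) :
    AdmEpi E.conflation p := by
  obtain ⟨K, i, w, hc⟩ := hhp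
  have := (E.shortExact_of_conflation _ hc).epi_g
  have : Epi p := epi_of_epi h p
  let κ : K ⟶ kernel p := kernel.lift p (i ≫ h) (by rw [assoc, w])
  let T := ShortComplex.mk (kernel.ι p) p (kernel.condition p)
  have hT : T.ShortExact :=
    .mk' (T.exact_of_f_is_kernel (kernelIsKernel p)) inferInstance ‹Epi p›
  have hpo := conflation_pushout hc κ
  let φ : ShortComplex.mk (pushout.inr i κ) (pushout.desc (h ≫ p) 0 (by simp [w]))
      (pushout.inr_desc _ _ _) ⟶ T :=
    { τ₁ := 𝟙 _
      τ₂ := pushout.desc h (kernel.ι p) (by simp [κ])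
      τ₃ := 𝟙 _
      comm₁₂ := by rw [pushout.inr_desc]; exact id_comp _
      comm₂₃ := pushout.hom_ext (by simp [T, pushout.inl_desc, pushout.inl_desc_assoc])
        (by simp [T, pushout.inr_desc, pushout.inr_desc_assoc]) }
  have : IsIso φ.τ₂ :=
    ShortComplex.isIso₂_of_shortExact_of_isIso₁₃' φ (E.shortExact_of_conflation _ hpo) hT
      (inferInstanceAs (IsIso (𝟙 _))) (inferInstanceAs (IsIso (𝟙 _)))
  have : IsIso φ := ShortComplex.isIso_of_isIso φ
  exact ⟨_, _, _, E.conflation_of_iso _ T (asIso φ) hpo⟩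

end Conflation

namespace Ext1Zero

variable {M : 𝒜} {S : ShortComplex 𝒜}

lemma nonempty_splitting (h : E.Ext1Zero S.X₃ S.X₁) (hS : E.conflation S) :
    Nonempty S.Splitting := by
  have hs := E.shortExact_of_conflation _ hS
  obtain ⟨r, hr⟩ := h _ _ _ _ hS
  exact ⟨.ofExactOfRetraction S hs.exact r hr hs.epi_g⟩

lemma exists_lift (hS : E.conflation S) (h : E.Ext1Zero M S.X₁)
    (f : M ⟶ S.X₃) : ∃ k : M ⟶ S.X₂, k ≫ S.g = f := by
  have sq := IsPullback.of_hasPullback S.g f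
  obtain ⟨σ⟩ := nonempty_splitting h (conflation_of_isPullback hS sq)
  exact ⟨σ.s ≫ pullback.fst S.g f, by rw [assoc, sq.w, ← assoc, σ.s_g, id_comp]⟩

lemma of_conflation (hS : E.conflation S) (h₁ : E.Ext1Zero M S.X₁)
    (h₃ : E.Ext1Zero M S.X₃) : E.Ext1Zero M S.X₂ := by
  intro Z i p w hc
  obtain ⟨σ⟩ := nonempty_splitting h₃ (conflation_pushout hc S.g)
  obtain ⟨(s : M ⟶ Z), (hsσ : s ≫ pushout.inl i S.g = σ.s)⟩ :=
    exists_lift (conflation_comp_pushout_inl hS ⟨_, _, _, hc⟩) h₁ σ.s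
  have hsp : s ≫ p = 𝟙 M := by
    calc s ≫ p = (s ≫ pushout.inl i S.g) ≫ pushout.desc p 0 (by simp [w]) := by
          rw [assoc, pushout.inl_desc]
      _ = σ.s ≫ pushout.desc p 0 (by simp [w]) := by rw [hsσ]
      _ = 𝟙 M := σ.s_g
  have hse := E.shortExact_of_conflation _ hc
  let τ := ShortComplex.Splitting.ofExactOfSection _ hse.exact s hsp hse.mono_f
  exact ⟨τ.r, τ.f_r⟩

end Ext1Zero

lemma EInjective.ext1Zero {I : 𝒜} (hI : E.EInjective I) (M : 𝒜) : E.Ext1Zero M I :=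
  fun _ _ _ _ hc ↦ hI _ hc (𝟙 I)

variable {𝒳 𝒴 : Set 𝒜}

lemma closedUnderExtensions_rightPerp : E.ClosedUnderExtensions (E.rightPerp 𝒳) :=
  fun _ hS h₁ h₃ X hX ↦ .of_conflation hS (h₁ X hX) (h₃ X hX)

lemma subset_leftPerp_rightPerp : 𝒳 ⊆ E.leftPerp (E.rightPerp 𝒳) :=
  fun X hX _ hY ↦ hY X hX

variable (E 𝒳 𝒴) in
/-- Every object is the end term of a conflation `0 → Y → X → A → 0` with `X ∈ 𝒳` and `Y ∈ 𝒴`,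
one half of the completeness of a cotorsion pair. When `𝒴 = 𝒳^⊥` such an `X → A` is a special
`𝒳`-precover; the definition leaves `𝒴` arbitrary. -/
def HasSpecialPrecovers : Prop :=
  ∀ A : 𝒜, ∃ (Y X : 𝒜) (i : Y ⟶ X) (p : X ⟶ A) (w : i ≫ p = 0),
    E.conflation (ShortComplex.mk i p w) ∧ X ∈ 𝒳 ∧ Y ∈ 𝒴

variable (E 𝒳 𝒴) in
/-- Every object is the initial term of a conflation `0 → A → Y → X → 0` with `X ∈ 𝒳` and
`Y ∈ 𝒴`, the other half of the completeness of a cotorsion pair. When `𝒳 = ^⊥𝒴` such an `A → Y`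
is a special `𝒴`-preenvelope; the definition leaves `𝒳` arbitrary. -/
def HasSpecialPreenvelopes : Prop :=
  ∀ A : 𝒜, ∃ (Y X : 𝒜) (i : A ⟶ Y) (p : Y ⟶ X) (w : i ≫ p = 0),
    E.conflation (ShortComplex.mk i p w) ∧ X ∈ 𝒳 ∧ Y ∈ 𝒴

namespace HasSpecialPrecovers

lemma leftPerp_subset (hpre : E.HasSpecialPrecovers 𝒳 𝒴) (h𝒳 : ClosedUnderDirectSummands 𝒳) :
    E.leftPerp 𝒴 ⊆ 𝒳 := by
  intro M hM
  obtain ⟨Y, X, i, p, w, hc, hX, hY⟩ := hpre M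
  obtain ⟨σ⟩ := Ext1Zero.nonempty_splitting (hM Y hY) hc
  exact h𝒳 X M ⟨σ.s, p, σ.s_g⟩ hX

/-- Salce's lemma. -/
lemma hasSpecialPreenvelopes (hpre : E.HasSpecialPrecovers 𝒳 𝒴) (hinj : E.EnoughInjectives)
    (h𝒴 : E.ClosedUnderExtensions 𝒴) (hinj𝒴 : ∀ I, E.EInjective I → I ∈ 𝒴) :
    E.HasSpecialPreenvelopes 𝒳 𝒴 := by
  intro A
  obtain ⟨I, C, a, b, _, hAIC, hI⟩ := hinj A
  obtain ⟨Y, X, i, p, _, hYXC, hX, hY⟩ := hpre C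
  have sq := IsPullback.of_hasPullback b p
  have hpb : pullback b p ∈ 𝒴 := h𝒴 _ (conflation_of_isPullback hYXC sq.flip) hY (hinj𝒴 I hI)
  exact ⟨_, X, _, _, _, conflation_of_isPullback hAIC sq, hX, hpb⟩

end HasSpecialPrecovers

end ExactStructure

section Precover

open ExactStructure

variable {𝒜 : Type u} [Category.{v} 𝒜] [Abelian 𝒜] {E : ExactStructure 𝒜} {𝒳 : Set 𝒜}

lemma IsPrecover.admEpi {X A : 𝒜} {p : X ⟶ A} (hp : IsPrecover 𝒳 p)
    (hproj : E.EnoughProjectives) (hproj𝒳 : ∀ P, E.EProjective P → P ∈ 𝒳) :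
    AdmEpi E.conflation p := by
  obtain ⟨K, P, i, q, w, hc, hP⟩ := hproj A
  obtain ⟨h, rfl⟩ := hp.2 P (hproj𝒳 P hP) q
  exact admEpi_of_comp h p ⟨K, i, w, hc⟩

lemma IsPrecover.conflation_kernel {X A : 𝒜} {p : X ⟶ A} (hp : IsPrecover 𝒳 p)
    (hproj : E.EnoughProjectives) (hproj𝒳 : ∀ P, E.EProjective P → P ∈ 𝒳) :
    E.conflation (ShortComplex.mk (kernel.ι p) p (kernel.condition p)) :=
  conflation_of_admEpi_of_isLimit (hp.admEpi hproj hproj𝒳) (kernelIsKernel p)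

end Precover

end ExactPaper

open ExactPaper CategoryTheory Limits in
/-- **Theorem 3.4, (1) ⇒ (3)**: if `𝒳` is `ℰ`-resolving, `𝒴 = 𝒳^⊥`, and every object
admits an epimorphic `𝒳`-precover with kernel in `𝒴`, then `(𝒳,𝒴)` is a complete
hereditary `ℰ`-cotorsion pair. -/
theorem completeHereditaryCotorsionPair_of_resolving
    {𝒜 : Type u} [Category.{v} 𝒜] [Abelian 𝒜]
    (E : ExactStructure 𝒜)
    (hproj : E.EnoughProjectives) (hinj : E.EnoughInjectives)
    (𝒳 𝒴 : Set 𝒜)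
    (hXiso : ClosedUnderIsos 𝒳) (hXsum : ClosedUnderDirectSummands 𝒳)
    (hYiso : ClosedUnderIsos 𝒴) (hYsum : ClosedUnderDirectSummands 𝒴)
    (hres : E.Resolving 𝒳) (hperp : 𝒴 = E.rightPerp 𝒳)
    (hcov : ∀ A : 𝒜, ∃ (X : 𝒜) (p : X ⟶ A),
      Epi p ∧ IsPrecover 𝒳 p ∧ kernel p ∈ 𝒴) :
    E.CompleteHereditaryCotorsionPair 𝒳 𝒴 := by
  subst hperp
  have hpre : E.HasSpecialPrecovers 𝒳 (E.rightPerp 𝒳) := by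
    intro A
    obtain ⟨X, p, -, hp, hker⟩ := hcov A
    exact ⟨_, X, _, p, _, hp.conflation_kernel hproj hres.1, hp.1, hker⟩
  have hleft : 𝒳 = E.leftPerp (E.rightPerp 𝒳) :=
    ExactStructure.subset_leftPerp_rightPerp.antisymm (hpre.leftPerp_subset hXsum)
  have henv : E.HasSpecialPreenvelopes 𝒳 (E.rightPerp 𝒳) :=
    hpre.hasSpecialPreenvelopes hinj ExactStructure.closedUnderExtensions_rightPerp
      fun _ hI X _ ↦ hI.ext1Zero X
  exact ⟨hleft, rfl, hpre, henv, hres⟩
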